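/- arXiv:2401.12602 — 6 statements merged into one kernel-verified Lean document; each statement's English description precedes it below -/
import Mathlib

section
/- Let A be an invertible n×n real matrix, A_Γ an n×m real matrix and R_Γ an m×n real matrix, and set M = R_Γ·A⁻¹·A_Γ. If X and Y are n×m real matrices satisfying the block lower-triangular system A·X = A_Γ and −A_Γ·R_Γ·X + A·Y = A_Γ (i.e. [[A, 0], [−A_Γ·R_Γ, A]]·[X; Y] = [A_Γ; A_Γ]), then the ICDD Schur complement matrix defined by S = I_m + R_Γ·(X − Y) equals I_m − M². -/
open Matrix

section LeftInverse

variable {R k n m : Type*} [Ring R] [Fintype k] [Fintype n] [DecidableEq n]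
  {A : Matrix k n R} {B : Matrix n k R}

theorem matrix_eq_mul_of_mul_eq (hBA : B * A = 1) {X : Matrix n m R} {F : Matrix k m R}
    (hX : A * X = F) : X = B * F := by
  rw [← hX, ← Matrix.mul_assoc, hBA, Matrix.one_mul]

theorem sub_eq_mul_of_block_lowerTriangular (hBA : B * A = 1) {C : Matrix k n R}
    {X Y : Matrix n m R} {F : Matrix k m R} (hX : A * X = F) (hY : -(C * X) + A * Y = F) :
    Y - X = B * (C * X) := by
  have hdiff : A * (Y - X) = C * X := by
    rw [Matrix.mul_sub, hX, ← hY]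
    abel
  exact matrix_eq_mul_of_mul_eq hBA hdiff

theorem icdd_schur_complement_eq_general [Fintype m] [DecidableEq m] (hBA : B * A = 1)
    {AΓ : Matrix k m R} {RΓ : Matrix m n R} {X Y : Matrix n m R}
    (hX : A * X = AΓ) (hY : -(AΓ * RΓ * X) + A * Y = AΓ) :
    1 + RΓ * (X - Y) = 1 - (RΓ * B * AΓ) ^ 2 := by
  have hXB : X = B * AΓ := matrix_eq_mul_of_mul_eq hBA hX
  calc 1 + RΓ * (X - Y)
      = 1 - RΓ * (Y - X) := by rw [← neg_sub Y X, Matrix.mul_neg, ← sub_eq_add_neg]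
    _ = 1 - RΓ * (B * (AΓ * RΓ * X)) := by rw [sub_eq_mul_of_block_lowerTriangular hBA hX hY]
    _ = 1 - (RΓ * B * AΓ) ^ 2 := by simp only [hXB, pow_two, Matrix.mul_assoc]

end LeftInverse

theorem icdd_schur_complement_eq
    {n m : Type*} [Fintype n] [Fintype m] [DecidableEq n] [DecidableEq m]
    (A : Matrix n n ℝ) (AΓ : Matrix n m ℝ) (RΓ : Matrix m n ℝ)
    (hA : IsUnit A.det)
    (M : Matrix m m ℝ) (hM : M = RΓ * A⁻¹ * AΓ)
    (X Y : Matrix n m ℝ)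
    (hX : A * X = AΓ)
    (hY : -(AΓ * RΓ * X) + A * Y = AΓ)
    (S : Matrix m m ℝ) (hS : S = 1 + RΓ * (X - Y)) :
    S = 1 - M ^ 2 := by
  rw [hS, hM]
  exact icdd_schur_complement_eq_general (nonsing_inv_mul A hA) hX hY
end

section
/- Let A be an invertible n×n real matrix, A_Γ an n×m real matrix, R_Γ an m×n real matrix, M = R_Γ·A⁻¹·A_Γ, and F : n → ℝ. If the vectors U, W ∈ ℝⁿ and g ∈ ℝᵐ satisfy the compact ICDD optimality system A·U + A_Γ·g = F, −A_Γ·(R_Γ·U) + A·W + A_Γ·g = 0, and −R_Γ·U + R_Γ·W + g = 0, then g satisfies the Schur complement system (I_m − M²)·g = (I_m − M)·R_Γ·A⁻¹·F. -/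
open Matrix

/-!
Applying `RΓ * A⁻¹` to the state equations leaves relations between interface vectors only:
`RΓ U + M g = RΓ A⁻¹ F` and `RΓ W + M (g - RΓ U) = 0`. Since `RΓ W = RΓ U - g` by the optimality
condition, the second one says `(1 - M) (RΓ U) = (1 - M) g`. Applying `1 - M` to the first one,
`RΓ U` may therefore be replaced by `g`, and `(1 - M) (1 + M) = 1 - M ^ 2`.
-/

section Interface

variable {R k l m n : Type*} [Ring R] [Fintype k] [Fintype m]

theorem mulVec_add_mulVec_eq_of_left_inverse [Fintype n] [DecidableEq n] {A : Matrix k n R}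
    {B : Matrix n k R} (hBA : B * A = 1) (T : Matrix l n R) (C : Matrix k m R)
    {x : n → R} {y : m → R} {f : k → R} (h : A *ᵥ x + C *ᵥ y = f) :
    T *ᵥ x + (T * B * C) *ᵥ y = (T * B) *ᵥ f := by
  rw [← h, mulVec_add, mulVec_mulVec, mulVec_mulVec, Matrix.mul_assoc T B A, hBA, Matrix.mul_one]

theorem one_sub_mulVec_eq_of_add_mulVec_sub_eq_zero [DecidableEq m] {M : Matrix m m R}
    {u w g : m → R} (hdual : w + M *ᵥ (g - u) = 0) (hopt : -u + w + g = 0) :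
    (1 - M) *ᵥ u = (1 - M) *ᵥ g := by
  have hw : w = u - g := by
    rw [← sub_eq_zero, ← hopt]
    abel
  rw [← sub_eq_zero, ← mulVec_sub, sub_mulVec, one_mulVec, ← hdual, hw, ← neg_sub u g, mulVec_neg,
    sub_eq_add_neg (u - g)]

theorem one_sub_sq_mulVec_eq_of_one_sub_mulVec_eq [DecidableEq m] {M : Matrix m m R}
    {u g : m → R} (h : (1 - M) *ᵥ u = (1 - M) *ᵥ g) :
    (1 - M ^ 2) *ᵥ g = (1 - M) *ᵥ (u + M *ᵥ g) := by
  calc (1 - M ^ 2) *ᵥ g = ((1 - M) * (1 + M)) *ᵥ g := by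
        congr 1
        noncomm_ring
    _ = (1 - M) *ᵥ g + (1 - M) *ᵥ (M *ᵥ g) := by
        rw [← mulVec_mulVec, add_mulVec, one_mulVec, mulVec_add]
    _ = (1 - M) *ᵥ (u + M *ᵥ g) := by rw [← h, mulVec_add]

theorem icdd_optimality_implies_schur_general [Fintype n] [DecidableEq n] [DecidableEq m]
    {A : Matrix k n R} {B : Matrix n k R} (hBA : B * A = 1)
    {AΓ : Matrix k m R} {RΓ : Matrix m n R} {M : Matrix m m R} (hM : M = RΓ * B * AΓ)
    {F : k → R} {U W : n → R} {g : m → R}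
    (hprimal : A *ᵥ U + AΓ *ᵥ g = F)
    (hdual : -(AΓ *ᵥ (RΓ *ᵥ U)) + A *ᵥ W + AΓ *ᵥ g = 0)
    (hopt : -(RΓ *ᵥ U) + RΓ *ᵥ W + g = 0) :
    (1 - M ^ 2) *ᵥ g = ((1 - M) * RΓ * B) *ᵥ F := by
  have hprimal_interface : RΓ *ᵥ U + M *ᵥ g = (RΓ * B) *ᵥ F :=
    hM ▸ mulVec_add_mulVec_eq_of_left_inverse hBA RΓ AΓ hprimal
  have hdual_grouped : A *ᵥ W + AΓ *ᵥ (g - RΓ *ᵥ U) = 0 := by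
    rw [← hdual, mulVec_sub]
    abel
  have hdual_interface : RΓ *ᵥ W + M *ᵥ (g - RΓ *ᵥ U) = 0 := by
    rw [hM, mulVec_add_mulVec_eq_of_left_inverse hBA RΓ AΓ hdual_grouped, mulVec_zero]
  have htrace : (1 - M) *ᵥ (RΓ *ᵥ U) = (1 - M) *ᵥ g :=
    one_sub_mulVec_eq_of_add_mulVec_sub_eq_zero hdual_interface hopt
  rw [one_sub_sq_mulVec_eq_of_one_sub_mulVec_eq htrace, hprimal_interface, mulVec_mulVec,
    Matrix.mul_assoc]

end Interface

theorem icdd_optimality_implies_schur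
    {n m : Type*} [Fintype n] [Fintype m] [DecidableEq n] [DecidableEq m]
    (A : Matrix n n ℝ) (AΓ : Matrix n m ℝ) (RΓ : Matrix m n ℝ)
    (hA : IsUnit A.det)
    (M : Matrix m m ℝ) (hM : M = RΓ * A⁻¹ * AΓ)
    (F : n → ℝ) (U W : n → ℝ) (g : m → ℝ)
    (h1 : A.mulVec U + AΓ.mulVec g = F)
    (h2 : -(AΓ.mulVec (RΓ.mulVec U)) + A.mulVec W + AΓ.mulVec g = 0)
    (h3 : -(RΓ.mulVec U) + RΓ.mulVec W + g = 0) :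
    (1 - M ^ 2).mulVec g = ((1 - M) * RΓ * A⁻¹).mulVec F :=
  icdd_optimality_implies_schur_general (nonsing_inv_mul A hA) hM h1 h2 h3
end

section
/- Let A be an invertible n×n real matrix, A_Γ an n×m real matrix, R_Γ an m×n real matrix, M = R_Γ·A⁻¹·A_Γ, and F : n → ℝ. If g ∈ ℝᵐ satisfies the Schur complement system (I_m − M²)·g = (I_m − M)·R_Γ·A⁻¹·F, then the vectors obtained by back-substitution, U := A⁻¹·(F − A_Γ·g) and W := A⁻¹·(A_Γ·(R_Γ·U − g)), satisfy the compact ICDD optimality system: A·U + A_Γ·g = F, −A_Γ·(R_Γ·U) + A·W + A_Γ·g = 0, and −R_Γ·U + R_Γ·W + g = 0. -/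
open Matrix

/-!
The first two equations hold for the back-substituted states whatever the control `g` is, because
`A` cancels its right inverse `B`. Applying `RΓ` to the states gives `RΓ U = RΓ (B F) - M g` and
`RΓ W = M (RΓ U - g)`, so the left-hand side of the third equation is
`(1 - M) (g - RΓ U) = (1 - M) ((1 + M) g - RΓ (B F))`, the residual of the Schur complement system.
-/

namespace ICDD

variable {R V V' X : Type*} [Semiring R] [AddCommGroup V] [AddCommGroup V'] [AddCommGroup X]
  [Module R V] [Module R V'] [Module R X]

/-- The operator `M = RΓ ∘ A⁻¹ ∘ AΓ` on interface controls, with `B` in the role of `A⁻¹`. -/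
def interfaceOperator (B : V' →ₗ[R] V) (AΓ : X →ₗ[R] V') (RΓ : V →ₗ[R] X) : Module.End R X :=
  RΓ ∘ₗ B ∘ₗ AΓ

/-- The Schur complement `S = 1 - M ^ 2` of the optimality system in the control unknown. -/
def schurComplement (B : V' →ₗ[R] V) (AΓ : X →ₗ[R] V') (RΓ : V →ₗ[R] X) : Module.End R X :=
  1 - interfaceOperator B AΓ RΓ ^ 2

/-- The right-hand side `b = (1 - M) (RΓ (A⁻¹ F))` of the Schur complement system, with `B` in the
role of `A⁻¹`. -/
def schurRhs (B : V' →ₗ[R] V) (AΓ : X →ₗ[R] V') (RΓ : V →ₗ[R] X) (F : V') : X :=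
  RΓ (B F) - interfaceOperator B AΓ RΓ (RΓ (B F))

/-- The primal state `U` recovered from a control `g` by back-substitution, with `B` in the role
of `A⁻¹`. -/
def primalState (B : V' →ₗ[R] V) (AΓ : X →ₗ[R] V') (F : V') (g : X) : V :=
  B (F - AΓ g)

/-- The dual state `W` recovered from a control `g` by back-substitution, with `B` in the role
of `A⁻¹`. -/
def dualState (B : V' →ₗ[R] V) (AΓ : X →ₗ[R] V') (RΓ : V →ₗ[R] X) (F : V') (g : X) : V :=
  B (AΓ (RΓ (primalState B AΓ F g) - g))

variable {A : V →ₗ[R] V'} {B : V' →ₗ[R] V}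

theorem map_primalState_add (hAB : Function.RightInverse B A) (AΓ : X →ₗ[R] V')
    (F : V') (g : X) : A (primalState B AΓ F g) + AΓ g = F := by
  rw [primalState, hAB, sub_add_cancel]

theorem map_dualState (hAB : Function.RightInverse B A) (AΓ : X →ₗ[R] V') (RΓ : V →ₗ[R] X)
    (F : V') (g : X) :
    A (dualState B AΓ RΓ F g) = AΓ (RΓ (primalState B AΓ F g)) - AΓ g := by
  rw [dualState, hAB, map_sub]

theorem restrict_primalState (B : V' →ₗ[R] V) (AΓ : X →ₗ[R] V') (RΓ : V →ₗ[R] X)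
    (F : V') (g : X) :
    RΓ (primalState B AΓ F g) = RΓ (B F) - interfaceOperator B AΓ RΓ g := by
  simp only [primalState, interfaceOperator, map_sub, LinearMap.comp_apply]

theorem restrict_dualState (B : V' →ₗ[R] V) (AΓ : X →ₗ[R] V') (RΓ : V →ₗ[R] X)
    (F : V') (g : X) :
    RΓ (dualState B AΓ RΓ F g) =
      interfaceOperator B AΓ RΓ (RΓ (primalState B AΓ F g) - g) :=
  rfl

theorem control_residual_eq_schur_residual (B : V' →ₗ[R] V) (AΓ : X →ₗ[R] V')
    (RΓ : V →ₗ[R] X) (F : V') (g : X) :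
    -RΓ (primalState B AΓ F g) + RΓ (dualState B AΓ RΓ F g) + g =
      schurComplement B AΓ RΓ g - schurRhs B AΓ RΓ F := by
  rw [restrict_dualState, restrict_primalState]
  simp only [schurComplement, schurRhs, map_sub, LinearMap.sub_apply, Module.End.one_apply,
    pow_two, Module.End.mul_apply]
  abel

section Matrix

variable {K n n' m : Type*} [CommRing K] [Fintype n] [Fintype n'] [Fintype m]
  [DecidableEq n] [DecidableEq n'] [DecidableEq m]

theorem rightInverse_toLin'_nonsing_inv {A : Matrix n n K} (hA : IsUnit A.det) :
    Function.RightInverse A⁻¹.toLin' A.toLin' := fun v => by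
  rw [← toLin'_mul_apply, mul_nonsing_inv A hA, toLin'_one, LinearMap.id_apply]

theorem interfaceOperator_toLin' (B : Matrix n n' K) (AΓ : Matrix n' m K) (RΓ : Matrix m n K) :
    interfaceOperator B.toLin' AΓ.toLin' RΓ.toLin' = (RΓ * B * AΓ).toLin' := by
  rw [interfaceOperator, Matrix.mul_assoc, toLin'_mul, toLin'_mul]

theorem schurComplement_toLin' (B : Matrix n n' K) (AΓ : Matrix n' m K) (RΓ : Matrix m n K) :
    schurComplement B.toLin' AΓ.toLin' RΓ.toLin' = (1 - (RΓ * B * AΓ) ^ 2).toLin' := by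
  rw [schurComplement, interfaceOperator_toLin', map_sub, toLin'_one, toLin'_pow,
    Module.End.one_eq_id]

theorem schurRhs_toLin' (B : Matrix n n' K) (AΓ : Matrix n' m K) (RΓ : Matrix m n K)
    (F : n' → K) :
    schurRhs B.toLin' AΓ.toLin' RΓ.toLin' F = ((1 - RΓ * B * AΓ) * RΓ * B) *ᵥ F := by
  simp only [schurRhs, interfaceOperator_toLin', toLin'_apply, ← mulVec_mulVec, sub_mulVec,
    one_mulVec]

end Matrix

end ICDD

open ICDD in
theorem icdd_schur_implies_optimality_general
    {R V V' X : Type*} [Semiring R] [AddCommGroup V] [AddCommGroup V'] [AddCommGroup X]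
    [Module R V] [Module R V'] [Module R X]
    {A : V →ₗ[R] V'} {B : V' →ₗ[R] V} (hAB : Function.RightInverse B A)
    (AΓ : X →ₗ[R] V') (RΓ : V →ₗ[R] X) (F : V') (g : X)
    (hg : schurComplement B AΓ RΓ g = schurRhs B AΓ RΓ F) :
    A (primalState B AΓ F g) + AΓ g = F ∧
    -AΓ (RΓ (primalState B AΓ F g)) + A (dualState B AΓ RΓ F g) + AΓ g = 0 ∧
    -RΓ (primalState B AΓ F g) + RΓ (dualState B AΓ RΓ F g) + g = 0 := by
  refine ⟨map_primalState_add hAB AΓ F g, ?_, ?_⟩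
  · rw [map_dualState hAB]
    abel
  · rw [control_residual_eq_schur_residual, hg, sub_self]

theorem icdd_schur_implies_optimality
    {n m : Type*} [Fintype n] [Fintype m] [DecidableEq n] [DecidableEq m]
    (A : Matrix n n ℝ) (AΓ : Matrix n m ℝ) (RΓ : Matrix m n ℝ)
    (hA : IsUnit A.det)
    (M : Matrix m m ℝ) (hM : M = RΓ * A⁻¹ * AΓ)
    (F : n → ℝ) (g : m → ℝ)
    (hg : (1 - M ^ 2).mulVec g = ((1 - M) * RΓ * A⁻¹).mulVec F)
    (U W : n → ℝ)
    (hU : U = A⁻¹.mulVec (F - AΓ.mulVec g))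
    (hW : W = A⁻¹.mulVec (AΓ.mulVec (RΓ.mulVec U - g))) :
    A.mulVec U + AΓ.mulVec g = F ∧
    -(AΓ.mulVec (RΓ.mulVec U)) + A.mulVec W + AΓ.mulVec g = 0 ∧
    -(RΓ.mulVec U) + RΓ.mulVec W + g = 0 := by
  subst hM hU hW
  exact icdd_schur_implies_optimality_general (ICDD.rightInverse_toLin'_nonsing_inv hA)
    AΓ.toLin' RΓ.toLin' F g (by rwa [ICDD.schurComplement_toLin', ICDD.schurRhs_toLin'])
end

section
/- Let A be an invertible n×n real matrix, A_Γ an n×m real matrix, R_Γ an m×n real matrix, and M = R_Γ·A⁻¹·A_Γ. Then the following are equivalent: (i) for every data vector F : n → ℝ the compact ICDD optimality system A·U + A_Γ·g = F, −A_Γ·(R_Γ·U) + A·W + A_Γ·g = 0, −R_Γ·U + R_Γ·W + g = 0 has a unique solution (U, W, g) ∈ ℝⁿ × ℝⁿ × ℝᵐ; (ii) the Schur complement matrix S = I_m − M² is invertible. -/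
open Matrix

/-!
The first two equations express the states through the control: `U = A⁻¹ (F - AΓ g)` and
`W = A⁻¹ (AΓ (RΓ U) - AΓ g)`. Substituting them into the third leaves the Schur complement equation
`(1 - M ^ 2) g = (1 - M) (RΓ A⁻¹ F)` for `g` alone, so the system and this equation are uniquely
solvable together. The right-hand side need not range over all vectors, so its solvability says
little about surjectivity of `1 - M ^ 2`; instead, uniqueness for `F = 0` makes `1 - M ^ 2`
injective, which suffices because an injective endomorphism of an Artinian module is surjective.
-/

theorem existsUnique_triple_graph_iff {α β γ : Type*} (f : γ → α) (h : γ → β) (p : γ → Prop) :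
    (∃! x : α × β × γ, x.1 = f x.2.2 ∧ x.2.1 = h x.2.2 ∧ p x.2.2) ↔ ∃! c, p c := by
  constructor
  · rintro ⟨⟨a, b, c⟩, ⟨-, -, hc⟩, huniq⟩
    refine ⟨c, hc, fun d hd ↦ ?_⟩
    exact congrArg (fun x ↦ x.2.2) (huniq (f d, h d, d) ⟨rfl, rfl, hd⟩)
  · rintro ⟨c, hc, huniq⟩
    refine ⟨(f c, h c, c), ⟨rfl, rfl, hc⟩, ?_⟩
    rintro ⟨a, b, d⟩ ⟨ha, hb, hd⟩
    obtain rfl : d = c := huniq d hd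
    exact Prod.ext ha (Prod.ext hb rfl)

section LinearEquations

variable {R n m : Type*} [CommRing R] [Fintype n] [Fintype m]

theorem mulVec_eq_iff_eq_inv_mulVec [DecidableEq n] {A : Matrix n n R} (hA : IsUnit A.det)
    {x y : n → R} : A *ᵥ x = y ↔ x = A⁻¹ *ᵥ y := by
  constructor
  · rintro rfl
    rw [mulVec_mulVec, nonsing_inv_mul A hA, one_mulVec]
  · rintro rfl
    rw [mulVec_mulVec, mul_nonsing_inv A hA, one_mulVec]

theorem isUnit_of_mulVec_injective [DecidableEq m] [IsArtinianRing R] {S : Matrix m m R}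
    (hS : Function.Injective S.mulVec) : IsUnit S :=
  mulVec_surjective_iff_isUnit.mp <|
    IsArtinian.surjective_of_injective_endomorphism S.mulVecLin hS

theorem forall_existsUnique_mulVec_eq_mulVec_iff_isUnit [DecidableEq m] [IsArtinianRing R]
    (S : Matrix m m R) (T : Matrix m n R) :
    (∀ v : n → R, ∃! g : m → R, S *ᵥ g = T *ᵥ v) ↔ IsUnit S := by
  constructor
  · intro huniq
    refine isUnit_of_mulVec_injective ((injective_iff_map_eq_zero S.mulVecLin).mpr fun g hg ↦ ?_)
    have hg' : S *ᵥ g = T *ᵥ 0 := by rwa [mulVec_zero]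
    have h0 : S *ᵥ 0 = T *ᵥ 0 := by rw [mulVec_zero, mulVec_zero]
    exact (huniq 0).unique hg' h0
  · intro hS v
    have hbij : Function.Bijective S.mulVec :=
      ⟨mulVec_injective_of_isUnit hS, mulVec_surjective_iff_isUnit.mpr hS⟩
    exact hbij.existsUnique (T *ᵥ v)

end LinearEquations

section ICDD

variable {R n m : Type*} [CommRing R] [Fintype n] [Fintype m]

/-- The compact ICDD optimality system with data `F`, whose unknown is the triple `(U, W, g)` of
primal state, dual state and interface control. -/
def IsICDDSolution (A : Matrix n n R) (AΓ : Matrix n m R) (RΓ : Matrix m n R) (F : n → R)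
    (UWg : (n → R) × (n → R) × (m → R)) : Prop :=
  A *ᵥ UWg.1 + AΓ *ᵥ UWg.2.2 = F ∧
    -(AΓ *ᵥ (RΓ *ᵥ UWg.1)) + A *ᵥ UWg.2.1 + AΓ *ᵥ UWg.2.2 = 0 ∧
    -(RΓ *ᵥ UWg.1) + RΓ *ᵥ UWg.2.1 + UWg.2.2 = 0

variable [DecidableEq n]

/-- The matrix `M = RΓ A⁻¹ AΓ`, which sends a control to minus the interface restriction of the
primal state that it induces for `F = 0`. It is meaningful only for invertible `A`, since `A⁻¹` is
`0` otherwise. -/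
noncomputable def interfaceMatrix (A : Matrix n n R) (AΓ : Matrix n m R) (RΓ : Matrix m n R) :
    Matrix m m R :=
  RΓ * A⁻¹ * AΓ

/-- The primal state `U` determined by the data `F` and the control `g` through the first equation
of the ICDD system. -/
noncomputable def primalState (A : Matrix n n R) (AΓ : Matrix n m R) (F : n → R) (g : m → R) :
    n → R :=
  A⁻¹ *ᵥ (F - AΓ *ᵥ g)

/-- The dual state `W` determined by the data `F` and the control `g` through the first two
equations of the ICDD system: it is a primal state whose data is `AΓ (RΓ U)`. -/
noncomputable def dualState (A : Matrix n n R) (AΓ : Matrix n m R) (RΓ : Matrix m n R)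
    (F : n → R) (g : m → R) : n → R :=
  primalState A AΓ (AΓ *ᵥ (RΓ *ᵥ primalState A AΓ F g)) g

variable (A : Matrix n n R) (AΓ : Matrix n m R) (RΓ : Matrix m n R)

theorem interfaceMatrix_mulVec (g : m → R) :
    interfaceMatrix A AΓ RΓ *ᵥ g = RΓ *ᵥ (A⁻¹ *ᵥ (AΓ *ᵥ g)) := by
  simp only [interfaceMatrix, mulVec_mulVec, Matrix.mul_assoc]

theorem mulVec_primalState (F : n → R) (g : m → R) :
    RΓ *ᵥ primalState A AΓ F g = RΓ *ᵥ (A⁻¹ *ᵥ F) - interfaceMatrix A AΓ RΓ *ᵥ g := by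
  rw [primalState, mulVec_sub, mulVec_sub, interfaceMatrix_mulVec]

theorem mulVec_dualState (F : n → R) (g : m → R) :
    RΓ *ᵥ dualState A AΓ RΓ F g =
      interfaceMatrix A AΓ RΓ *ᵥ (RΓ *ᵥ primalState A AΓ F g) - interfaceMatrix A AΓ RΓ *ᵥ g := by
  rw [dualState, mulVec_primalState, ← interfaceMatrix_mulVec]

theorem neg_mulVec_primalState_add_mulVec_dualState_add [DecidableEq m] (F : n → R) (g : m → R) :
    -(RΓ *ᵥ primalState A AΓ F g) + RΓ *ᵥ dualState A AΓ RΓ F g + g =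
      (1 - interfaceMatrix A AΓ RΓ ^ 2) *ᵥ g -
        (1 - interfaceMatrix A AΓ RΓ) *ᵥ (RΓ *ᵥ (A⁻¹ *ᵥ F)) := by
  rw [mulVec_dualState, mulVec_primalState]
  simp only [sub_mulVec, one_mulVec, mulVec_sub, pow_two, ← mulVec_mulVec]
  abel

variable {A}

theorem mulVec_add_mulVec_eq_iff_eq_primalState (hA : IsUnit A.det) {F U : n → R} {g : m → R} :
    A *ᵥ U + AΓ *ᵥ g = F ↔ U = primalState A AΓ F g := by
  rw [← eq_sub_iff_add_eq, mulVec_eq_iff_eq_inv_mulVec hA, primalState]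

variable [DecidableEq m]

theorem isICDDSolution_iff_states_and_schur (hA : IsUnit A.det) (F : n → R)
    (UWg : (n → R) × (n → R) × (m → R)) :
    IsICDDSolution A AΓ RΓ F UWg ↔
      UWg.1 = primalState A AΓ F UWg.2.2 ∧ UWg.2.1 = dualState A AΓ RΓ F UWg.2.2 ∧
        (1 - interfaceMatrix A AΓ RΓ ^ 2) *ᵥ UWg.2.2 =
          ((1 - interfaceMatrix A AΓ RΓ) * RΓ * A⁻¹) *ᵥ F := by
  obtain ⟨U, W, g⟩ := UWg
  simp only [IsICDDSolution]
  have dual_iff : -(AΓ *ᵥ (RΓ *ᵥ U)) + A *ᵥ W + AΓ *ᵥ g = 0 ↔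
      W = primalState A AΓ (AΓ *ᵥ (RΓ *ᵥ U)) g := by
    rw [add_assoc, neg_add_eq_zero, eq_comm, mulVec_add_mulVec_eq_iff_eq_primalState AΓ hA]
  rw [mulVec_add_mulVec_eq_iff_eq_primalState AΓ hA, dual_iff]
  refine and_congr_right fun hU ↦ ?_
  rw [hU, ← dualState]
  refine and_congr_right fun hW ↦ ?_
  rw [hW, neg_mulVec_primalState_add_mulVec_dualState_add, sub_eq_zero, mulVec_mulVec,
    mulVec_mulVec, Matrix.mul_assoc]

theorem existsUnique_isICDDSolution_iff_existsUnique_schur (hA : IsUnit A.det) (F : n → R) :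
    (∃! UWg, IsICDDSolution A AΓ RΓ F UWg) ↔
      ∃! g, (1 - interfaceMatrix A AΓ RΓ ^ 2) *ᵥ g =
        ((1 - interfaceMatrix A AΓ RΓ) * RΓ * A⁻¹) *ᵥ F :=
  (existsUnique_congr (isICDDSolution_iff_states_and_schur AΓ RΓ hA F)).trans
    (existsUnique_triple_graph_iff (primalState A AΓ F) (dualState A AΓ RΓ F) fun g ↦
      (1 - interfaceMatrix A AΓ RΓ ^ 2) *ᵥ g =
        ((1 - interfaceMatrix A AΓ RΓ) * RΓ * A⁻¹) *ᵥ F)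

end ICDD

theorem icdd_unique_solvability_iff_schur_invertible_general
    {R n m : Type*} [CommRing R] [IsArtinianRing R]
    [Fintype n] [Fintype m] [DecidableEq n] [DecidableEq m]
    (A : Matrix n n R) (AΓ : Matrix n m R) (RΓ : Matrix m n R) (hA : IsUnit A.det) :
    (∀ F : n → R, ∃! UWg, IsICDDSolution A AΓ RΓ F UWg) ↔
      IsUnit (1 - interfaceMatrix A AΓ RΓ ^ 2) := by
  simp only [existsUnique_isICDDSolution_iff_existsUnique_schur AΓ RΓ hA]
  exact forall_existsUnique_mulVec_eq_mulVec_iff_isUnit _ _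

theorem icdd_unique_solvability_iff_schur_invertible
    {n m : Type*} [Fintype n] [Fintype m] [DecidableEq n] [DecidableEq m]
    (A : Matrix n n ℝ) (AΓ : Matrix n m ℝ) (RΓ : Matrix m n ℝ)
    (hA : IsUnit A.det)
    (M : Matrix m m ℝ) (hM : M = RΓ * A⁻¹ * AΓ) :
    (∀ F : n → ℝ, ∃! UWg : (n → ℝ) × (n → ℝ) × (m → ℝ),
        A.mulVec UWg.1 + AΓ.mulVec UWg.2.2 = F ∧
        -(AΓ.mulVec (RΓ.mulVec UWg.1)) + A.mulVec UWg.2.1 + AΓ.mulVec UWg.2.2 = 0 ∧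
        -(RΓ.mulVec UWg.1) + RΓ.mulVec UWg.2.1 + UWg.2.2 = 0) ↔
    IsUnit (1 - M ^ 2) := by
  subst hM
  exact icdd_unique_solvability_iff_schur_invertible_general A AΓ RΓ hA
end

section
/- Let A be an invertible n×n real matrix, A_Γ an n×m real matrix, R_Γ an m×n real matrix, M = R_Γ·A⁻¹·A_Γ, and F : n → ℝ. Assume that I_m − M is invertible. If (U, W, g) ∈ ℝⁿ × ℝⁿ × ℝᵐ satisfies the compact ICDD optimality system A·U + A_Γ·g = F, −A_Γ·(R_Γ·U) + A·W + A_Γ·g = 0, −R_Γ·U + R_Γ·W + g = 0, then the dual state vanishes, W = 0, and (U, g) satisfies the reduced coupled system A·U + A_Γ·g = F and g = R_Γ·U. -/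
open Matrix

/-!
Substituting the optimality condition `g = RΓ U - RΓ W` into the dual equation cancels the primal
state and leaves `(A - AΓ RΓ) W = 0`. Eliminating `g` from the reduced coupled system shows that
`A - AΓ RΓ` is also the matrix of that system. By the matrix determinant lemma its determinant is
`det A * det (1 - RΓ A⁻¹ AΓ)`, so it is invertible and `W = 0`.
-/

section DualState

variable {α k n m : Type*} [NonUnitalRing α] [Fintype n] [Fintype m]

/-- The compact ICDD optimality system: the primal equation, the dual equation and the optimality
condition on the interface control `g`. The equations may be indexed by a type `k` other than the
type `n` indexing the states. -/
structure ICDDOptimalitySystem (A : Matrix k n α) (AΓ : Matrix k m α) (RΓ : Matrix m n α)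
    (F : k → α) (U W : n → α) (g : m → α) : Prop where
  primal : A *ᵥ U + AΓ *ᵥ g = F
  dual : -(AΓ *ᵥ (RΓ *ᵥ U)) + A *ᵥ W + AΓ *ᵥ g = 0
  control : -(RΓ *ᵥ U) + RΓ *ᵥ W + g = 0

/-- The reduced coupled system, in which the interface control `g` is the trace `RΓ U` of the
primal state. -/
structure ReducedCoupledSystem (A : Matrix k n α) (AΓ : Matrix k m α) (RΓ : Matrix m n α)
    (F : k → α) (U : n → α) (g : m → α) : Prop where
  primal : A *ᵥ U + AΓ *ᵥ g = F
  control : g = RΓ *ᵥ U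

variable {A : Matrix k n α} {AΓ : Matrix k m α} {RΓ : Matrix m n α}
  {F : k → α} {U W : n → α} {g : m → α}

theorem ICDDOptimalitySystem.control_eq (h : ICDDOptimalitySystem A AΓ RΓ F U W g) :
    g = RΓ *ᵥ U - RΓ *ᵥ W := by
  rw [eq_neg_of_add_eq_zero_right h.control]
  abel

theorem ICDDOptimalitySystem.sub_mul_mulVec_dual_eq_zero
    (h : ICDDOptimalitySystem A AΓ RΓ F U W g) : (A - AΓ * RΓ) *ᵥ W = 0 := by
  calc (A - AΓ * RΓ) *ᵥ W = A *ᵥ W - AΓ *ᵥ (RΓ *ᵥ W) := by rw [sub_mulVec, mulVec_mulVec]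
    _ = -(AΓ *ᵥ (RΓ *ᵥ U)) + A *ᵥ W + AΓ *ᵥ (RΓ *ᵥ U - RΓ *ᵥ W) := by rw [mulVec_sub]; abel
    _ = 0 := by rw [← h.control_eq, h.dual]

theorem ReducedCoupledSystem.icddOptimalitySystem_zero
    (h : ReducedCoupledSystem A AΓ RΓ F U g) : ICDDOptimalitySystem A AΓ RΓ F U 0 g where
  primal := h.primal
  dual := by rw [h.control, mulVec_zero, add_zero, neg_add_cancel]
  control := by rw [h.control, mulVec_zero, add_zero, neg_add_cancel]

theorem icdd_optimality_dual_vanishes_general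
    (hinj : Function.Injective (A - AΓ * RΓ).mulVec) :
    ICDDOptimalitySystem A AΓ RΓ F U W g ↔ W = 0 ∧ ReducedCoupledSystem A AΓ RΓ F U g := by
  constructor
  · intro h
    have hW : W = 0 := hinj (h.sub_mul_mulVec_dual_eq_zero.trans (mulVec_zero _).symm)
    refine ⟨hW, h.primal, ?_⟩
    rw [h.control_eq, hW, mulVec_zero, sub_zero]
  · rintro ⟨rfl, h⟩
    exact h.icddOptimalitySystem_zero

end DualState

theorem isUnit_sub_mul_of_isUnit_one_sub {α n m : Type*} [CommRing α] [Fintype n] [Fintype m]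
    [DecidableEq n] [DecidableEq m] {A : Matrix n n α} {B : Matrix n m α} {C : Matrix m n α}
    (hA : IsUnit A.det) (hS : IsUnit (1 - C * A⁻¹ * B)) : IsUnit (A - B * C) := by
  have hdet : (A - B * C).det = A.det * (1 - C * A⁻¹ * B).det := by
    simpa only [Matrix.neg_mul, Matrix.mul_neg, ← sub_eq_add_neg] using det_add_mul (-B) C hA
  rw [isUnit_iff_isUnit_det, hdet]
  exact hA.mul ((isUnit_iff_isUnit_det _).mp hS)

theorem icdd_optimality_dual_vanishes
    {n m : Type*} [Fintype n] [Fintype m] [DecidableEq n] [DecidableEq m]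
    (A : Matrix n n ℝ) (AΓ : Matrix n m ℝ) (RΓ : Matrix m n ℝ)
    (hA : IsUnit A.det)
    (M : Matrix m m ℝ) (hM : M = RΓ * A⁻¹ * AΓ)
    (hIM : IsUnit (1 - M))
    (F : n → ℝ) (U W : n → ℝ) (g : m → ℝ)
    (h1 : A.mulVec U + AΓ.mulVec g = F)
    (h2 : -(AΓ.mulVec (RΓ.mulVec U)) + A.mulVec W + AΓ.mulVec g = 0)
    (h3 : -(RΓ.mulVec U) + RΓ.mulVec W + g = 0) :
    W = 0 ∧ A.mulVec U + AΓ.mulVec g = F ∧ g = RΓ.mulVec U := by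
  subst hM
  have hinj := mulVec_injective_of_isUnit (isUnit_sub_mul_of_isUnit_one_sub hA hIM)
  obtain ⟨hW, hred⟩ := (icdd_optimality_dual_vanishes_general hinj).mp ⟨h1, h2, h3⟩
  exact ⟨hW, hred.primal, hred.control⟩
end

section
/- Let A be an invertible n×n real matrix, A_Γ an n×m real matrix, R_Γ an m×n real matrix, M = R_Γ·A⁻¹·A_Γ, and F : n → ℝ. Assume I_m − M is invertible. If g ∈ ℝᵐ satisfies the ICDD Schur complement system (I_m − M²)·g = (I_m − M)·R_Γ·A⁻¹·F and U := A⁻¹·(F − A_Γ·g) is the final primal solve, then (U, g) satisfies the reduced coupled system: A·U + A_Γ·g = F and g = R_Γ·U. -/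
open Matrix

section

variable {R n m : Type*} [Ring R] [Fintype n] [Fintype m] [DecidableEq m]

theorem one_sub_sq_mulVec_eq_one_sub_mulVec_iff {M : Matrix m m R}
    (hM : Function.Injective (1 - M).mulVec) (g b : m → R) :
    (1 - M ^ 2) *ᵥ g = (1 - M) *ᵥ b ↔ (1 + M) *ᵥ g = b := by
  have factorization : 1 - M ^ 2 = (1 - M) * (1 + M) := by noncomm_ring
  rw [factorization, ← mulVec_mulVec, hM.eq_iff]

theorem eq_mulVec_mulVec_sub_iff {l : Type*} [Fintype l] (C : Matrix m l R) (B : Matrix l n R)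
    (D : Matrix n m R) (F : n → R) (g : m → R) :
    g = C *ᵥ (B *ᵥ (F - D *ᵥ g)) ↔ (1 + C * B * D) *ᵥ g = (C * B) *ᵥ F := by
  rw [mulVec_mulVec, mulVec_sub, mulVec_mulVec, add_mulVec, one_mulVec, eq_sub_iff_add_eq]

variable [DecidableEq n]

theorem mulVec_add_eq_iff_eq_invOf_mulVec_sub (A : Matrix n n R) [Invertible A] (U c F : n → R) :
    A *ᵥ U + c = F ↔ U = ⅟A *ᵥ (F - c) := by
  rw [← eq_sub_iff_add_eq]
  constructor
  · intro h
    rw [← h, mulVec_mulVec, invOf_mul_self, one_mulVec]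
  · intro h
    rw [h, mulVec_mulVec, mul_invOf_self, one_mulVec]

theorem icdd_schur_solution_gives_reduced_system_general
    (A : Matrix n n R) [Invertible A] (AΓ : Matrix n m R) (RΓ : Matrix m n R)
    (M : Matrix m m R) (hM : M = RΓ * ⅟A * AΓ)
    (hIM : Function.Injective (1 - M).mulVec) (F U : n → R) (g : m → R) :
    (1 - M ^ 2) *ᵥ g = ((1 - M) * RΓ * ⅟A) *ᵥ F ∧ U = ⅟A *ᵥ (F - AΓ *ᵥ g) ↔
      A *ᵥ U + AΓ *ᵥ g = F ∧ g = RΓ *ᵥ U := by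
  rw [mulVec_add_eq_iff_eq_invOf_mulVec_sub, and_comm]
  refine and_congr_right fun hU => ?_
  rw [Matrix.mul_assoc, ← mulVec_mulVec, one_sub_sq_mulVec_eq_one_sub_mulVec_iff hIM, hM, hU,
    eq_mulVec_mulVec_sub_iff]

end

theorem icdd_schur_solution_gives_reduced_system
    {n m : Type*} [Fintype n] [Fintype m] [DecidableEq n] [DecidableEq m]
    (A : Matrix n n ℝ) (AΓ : Matrix n m ℝ) (RΓ : Matrix m n ℝ)
    (hA : IsUnit A.det)
    (M : Matrix m m ℝ) (hM : M = RΓ * A⁻¹ * AΓ)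
    (hIM : IsUnit (1 - M))
    (F : n → ℝ) (g : m → ℝ)
    (hg : (1 - M ^ 2).mulVec g = ((1 - M) * RΓ * A⁻¹).mulVec F)
    (U : n → ℝ)
    (hU : U = A⁻¹.mulVec (F - AΓ.mulVec g)) :
    A.mulVec U + AΓ.mulVec g = F ∧ g = RΓ.mulVec U := by
  let _ := A.invertibleOfIsUnitDet hA
  rw [← invOf_eq_nonsing_inv] at hM hg hU
  exact (icdd_schur_solution_gives_reduced_system_general A AΓ RΓ M hM
    (mulVec_injective_of_isUnit hIM) F U g).mp ⟨hg, hU⟩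
end
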